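/- arXiv:2403.15259 — 2 statements merged into one kernel-verified Lean document; each statement's English description precedes it below -/
import Mathlib

section
/- Let E be an ordered Polish space. Then the space M₁(E) of Borel probability measures on E, equipped with a complete metric generating the topology of weak convergence and with the stochastic order ⪯, is itself an ordered Polish space; in particular, if μₙ → μ and νₙ → ν weakly and μₙ ⪯ νₙ for all n, then μ ⪯ ν. -/
open MeasureTheory ProbabilityTheory Filter Topology

/-- `μ` is *stochastically smaller* than `ν` (written `μ ⪯ ν` in the paper):
`μ I ≤ ν I` for every Borel increasing (upper) set `I`. -/
def StochDom {E : Type*} [MeasurableSpace E] [Preorder E] (μ ν : Measure E) : Prop :=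
  ∀ I : Set E, MeasurableSet I → IsUpperSet I → μ I ≤ ν I

/-- A Markov kernel `P` is *(stochastically) monotone* if for every bounded monotone
measurable `g : E → [0,1]` the map `x ↦ ∫ g dP(x)` is again monotone. -/
def MonotoneKernel {E : Type*} [MeasurableSpace E] [Preorder E] (P : Kernel E E) : Prop :=
  ∀ g : E → ℝ, Measurable g → Monotone g → (∀ x, g x ∈ Set.Icc (0 : ℝ) 1) →
    Monotone fun x => ∫ y, g y ∂(P x)

/-- The `n`-step transition kernel `P⁽ⁿ⁾` of a Markov kernel `P`;
`kpow P n x` is the law of `Xₙˣ`, the chain with kernel `P` started at `x`. -/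
noncomputable def kpow {E : Type*} [MeasurableSpace E] (P : Kernel E E) : ℕ → Kernel E E
  | 0 => Kernel.id
  | n + 1 => P.comp (kpow P n)

/-- The process `Z` on `(Ω, μ)` is a (possibly time-inhomogeneous) Markov chain with
one-step kernels `Q n`, expressed through finite-dimensional distributions: for every
bounded measurable cylinder functional `φ` of the past and every Borel set `A`,
`E[φ(Z₀,…,Zₙ) · 1_A(Z_{n+1})] = E[φ(Z₀,…,Zₙ) · (Q n)(Zₙ, A)]`. -/
def MCStep {Ω S : Type*} [MeasurableSpace Ω] [MeasurableSpace S]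
    (μ : Measure Ω) (Q : ℕ → Kernel S S) (Z : ℕ → Ω → S) : Prop :=
  ∀ (n : ℕ) (A : Set S), MeasurableSet A →
    ∀ φ : (Fin (n + 1) → S) → ℝ, Measurable φ → (∀ v, φ v ∈ Set.Icc (0 : ℝ) 1) →
      ∫ ω, φ (fun i => Z i.1 ω) * A.indicator (fun _ => (1 : ℝ)) (Z (n + 1) ω) ∂μ
        = ∫ ω, φ (fun i => Z i.1 ω) * ((Q n) (Z n ω) A).toReal ∂μ

/-- `X` on `(Ω, μ)` is a time-homogeneous Markov chain with kernel `P` started at `x`. -/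
def IsMChain {E Ω : Type*} [MeasurableSpace E] [MeasurableSpace Ω]
    (P : Kernel E E) (x : E) (μ : Measure Ω) (X : ℕ → Ω → E) : Prop :=
  IsProbabilityMeasure μ ∧ (∀ n, Measurable (X n)) ∧ (∀ᵐ ω ∂μ, X 0 ω = x) ∧
    MCStep μ (fun _ => P) X

/-- A *Markovian coupling* of two chains with kernel `P` started at `x` and `y`:
both coordinates are Markov chains with kernel `P` and the pair process is itself a
(possibly time-inhomogeneous) Markov chain. -/
def IsMarkovianCoupling {E Ω : Type*} [MeasurableSpace E] [MeasurableSpace Ω]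
    (P : Kernel E E) (x y : E) (μ : Measure Ω) (X Y : ℕ → Ω → E) : Prop :=
  IsMChain P x μ X ∧ IsMChain P y μ Y ∧
    ∃ Q : ℕ → Kernel (E × E) (E × E), (∀ n, IsMarkovKernel (Q n)) ∧
      MCStep μ Q fun n ω => (X n ω, Y n ω)

/-- A set `H ⊆ E × E` is *achievable* for the kernel `P` if for all `x, y` there is a
Markovian coupling of the chains started at `x` and `y` whose hitting time of `H`
is finite almost surely. -/
def Achievable {E : Type*} [MeasurableSpace E] (P : Kernel E E) (H : Set (E × E)) : Prop :=
  ∀ x y : E, ∃ (Ω : Type) (_ : MeasurableSpace Ω) (μ : Measure Ω) (X Y : ℕ → Ω → E),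
    IsMarkovianCoupling P x y μ X Y ∧ ∀ᵐ ω ∂μ, ∃ n, (X n ω, Y n ω) ∈ H

/-- Condition (BMC): every increasing sequence bounded above by some element converges. -/
def BMC (E : Type*) [Preorder E] [TopologicalSpace E] : Prop :=
  ∀ (x : ℕ → E) (y : E), Monotone x → (∀ n, x n ≤ y) → ∃ l, Tendsto x atTop (nhds l)

/-- The ordered metric space `E` is *normal*: there is a continuous `h : [0,∞) → [0,∞)`
with `h 0 = 0` such that `x ⪯ y ⪯ z` implies `d(x,y) ≤ h (d(x,z))`. -/
def NormalOrdered (E : Type*) [PseudoMetricSpace E] [Preorder E] : Prop :=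
  ∃ h : ℝ → ℝ, ContinuousOn h (Set.Ici 0) ∧ h 0 = 0 ∧ (∀ t ≥ (0 : ℝ), 0 ≤ h t) ∧
    ∀ x y z : E, x ≤ y → y ≤ z → dist x y ≤ h (dist x z)

/-- Condition (PR): there are `x₀ ⪯ y₀` such that the hitting times
`ν⁻ = min {n ≥ 1 : Xₙ^{x₀} ⪰ x₀}` and `ν⁺ = min {n ≥ 1 : Xₙ^{y₀} ⪯ y₀}`
have finite expectations. -/
def PRCond {E : Type*} [MeasurableSpace E] [Preorder E] (P : Kernel E E) : Prop :=
  ∃ x₀ y₀ : E, x₀ ≤ y₀ ∧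
    (∃ (Ω : Type) (_ : MeasurableSpace Ω) (μ : Measure Ω) (X : ℕ → Ω → E),
      IsMChain P x₀ μ X ∧ (∀ᵐ ω ∂μ, ∃ n, 1 ≤ n ∧ x₀ ≤ X n ω) ∧
      Integrable (fun ω => ((sInf {n : ℕ | 1 ≤ n ∧ x₀ ≤ X n ω} : ℕ) : ℝ)) μ) ∧
    (∃ (Ω : Type) (_ : MeasurableSpace Ω) (μ : Measure Ω) (X : ℕ → Ω → E),
      IsMChain P y₀ μ X ∧ (∀ᵐ ω ∂μ, ∃ n, 1 ≤ n ∧ X n ω ≤ y₀) ∧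
      Integrable (fun ω => ((sInf {n : ℕ | 1 ≤ n ∧ X n ω ≤ y₀} : ℕ) : ℝ)) μ)

/-!
The order condition can be tested on open sets: `μ ⪯ ν` holds iff `μ U + ν V ≤ ν univ` whenever
`U` and `V` are open and no point of `U` lies below a point of `V`. Necessity follows from an order
version of Lusin separation, which puts an increasing Borel set between `U` and `V`. For
sufficiency, approximate an increasing set `I` and its complement from inside by compact sets: since
the order is closed, the tube lemma enlarges these to open sets `U` and `V` as above. Each of the
conditions is closed because `μ ↦ μ U` is lower semicontinuous for open `U`.

For antisymmetry, the separating increasing sets attached to pairs of basic open sets form a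
countable family which separates points, so by Blackwell's theorem they generate the Borel
σ-algebra; increasing Borel sets are stable under intersection, hence determine a finite measure.

Polishness comes from the Lévy–Prokhorov metric: totally bounded sets of measures are tight, so
Prokhorov's theorem yields completeness, while an embedding of the space into the Hilbert cube
yields second countability.
-/

section LevyProkhorov

variable {X : Type*} [PseudoMetricSpace X] [MeasurableSpace X]

theorem isTightMeasureSet_of_forall_exists_finite_thickening [CompleteSpace X]
    {S : Set (Measure X)} (h : ∀ ε : ℝ, 0 < ε → ∃ t : Set X, t.Finite ∧
      ∀ μ ∈ S, μ (Metric.thickening ε t)ᶜ ≤ ENNReal.ofReal ε) :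
    IsTightMeasureSet S := by
  rw [isTightMeasureSet_iff_exists_isCompact_measure_compl_le]
  intro ε hε
  obtain ⟨δ, hδ, hsum⟩ := ENNReal.exists_pos_sum_of_countable hε.ne' ℕ
  let r : ℕ → ℝ := fun m => min (δ m) (1 / (m + 1))
  have hr : ∀ m, 0 < r m := fun m => lt_min (hδ m) Nat.one_div_pos_of_nat
  choose t htf ht using fun m => h (r m) (hr m)
  have hK : IsCompact (⋂ m, Metric.cthickening (r m) (t m)) := by
    refine TotallyBounded.isCompact_of_isClosed (Metric.totallyBounded_iff.2 fun ρ hρ => ?_)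
      (isClosed_iInter fun m => Metric.isClosed_cthickening)
    obtain ⟨m, hm⟩ := exists_nat_one_div_lt hρ
    refine ⟨t m, htf m, (Set.iInter_subset _ m).trans ?_⟩
    rw [← Metric.thickening_eq_biUnion_ball]
    exact Metric.cthickening_subset_thickening' hρ ((min_le_right _ _).trans_lt hm) _
  refine ⟨_, hK, fun μ hμ => ?_⟩
  calc μ (⋂ m, Metric.cthickening (r m) (t m))ᶜ
      ≤ ∑' m, μ (Metric.cthickening (r m) (t m))ᶜ := by
        rw [Set.compl_iInter]; exact measure_iUnion_le _
    _ ≤ ∑' m, (δ m : ENNReal) := by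
        refine ENNReal.tsum_le_tsum fun m => ?_
        calc μ (Metric.cthickening (r m) (t m))ᶜ
            ≤ μ (Metric.thickening (r m) (t m))ᶜ :=
              measure_mono (Set.compl_subset_compl.2 (Metric.thickening_subset_cthickening _ _))
          _ ≤ ENNReal.ofReal (r m) := ht m μ hμ
          _ ≤ δ m := ENNReal.ofReal_le_of_le_toReal (min_le_left _ _)
    _ ≤ ε := hsum.le

theorem exists_finite_measure_compl_thickening_le [CompleteSpace X] [SecondCountableTopology X]
    [BorelSpace X] (μ : Measure X) [IsFiniteMeasure μ] {ε : ℝ} (hε : 0 < ε) :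
    ∃ t : Set X, t.Finite ∧ μ (Metric.thickening ε t)ᶜ ≤ ENNReal.ofReal ε := by
  obtain ⟨K, hK, hμK⟩ := isTightMeasureSet_iff_exists_isCompact_measure_compl_le.1
    (isTightMeasureSet_singleton (μ := μ)) _ (ENNReal.ofReal_pos.2 hε)
  obtain ⟨t, -, htf, hKt⟩ := hK.finite_cover_balls hε
  rw [← Metric.thickening_eq_biUnion_ball] at hKt
  exact ⟨t, htf, (measure_mono (Set.compl_subset_compl.2 hKt)).trans (hμK μ rfl)⟩

theorem isTightMeasureSet_of_totallyBounded_levyProkhorov [CompleteSpace X]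
    [SecondCountableTopology X] [BorelSpace X] {S : Set (LevyProkhorov (ProbabilityMeasure X))}
    (hS : TotallyBounded S) :
    IsTightMeasureSet ((fun μ => (μ.toMeasure : Measure X)) '' S) := by
  refine isTightMeasureSet_of_forall_exists_finite_thickening fun ε hε => ?_
  have hε2 := half_pos hε
  obtain ⟨C, hCf, hC⟩ := Metric.totallyBounded_iff.1 hS (ε / 2) hε2
  choose t htf ht using fun ν : LevyProkhorov (ProbabilityMeasure X) =>
    exists_finite_measure_compl_thickening_le (ν.toMeasure : Measure X) hε2
  refine ⟨⋃ ν ∈ C, t ν, hCf.biUnion fun ν _ => htf ν, ?_⟩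
  rintro _ ⟨μ, hμ, rfl⟩
  obtain ⟨ν, hνC, hμν⟩ := Set.mem_iUnion₂.1 (hC hμ)
  let T := Metric.thickening ε (⋃ ν ∈ C, t ν)
  have hT : Metric.thickening (ε / 2) Tᶜ ⊆ (Metric.thickening (ε / 2) (t ν))ᶜ := by
    refine .trans (Metric.thickening_subset_of_subset _ (Set.compl_subset_compl.2 ?_))
      (Metric.thickening_compl_thickening_self_subset_compl _ _)
    refine (Metric.thickening_thickening_subset _ _ _).trans ?_
    rw [add_halves]
    exact Metric.thickening_subset_of_subset _ (Set.subset_biUnion_of_mem hνC)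
  have hdist : levyProkhorovEDist (μ.toMeasure : Measure X) ν.toMeasure
      < ENNReal.ofReal (ε / 2) := by
    rw [← LevyProkhorov.edist_probabilityMeasure_def, edist_lt_ofReal]
    exact hμν
  have hμT := left_measure_le_of_levyProkhorovEDist_lt hdist
    (B := Tᶜ) Metric.isOpen_thickening.measurableSet.compl
  rw [ENNReal.toReal_ofReal hε2.le] at hμT
  calc (μ.toMeasure : Measure X) Tᶜ
      ≤ (ν.toMeasure : Measure X) (Metric.thickening (ε / 2) Tᶜ) + ENNReal.ofReal (ε / 2) := hμT
    _ ≤ ENNReal.ofReal (ε / 2) + ENNReal.ofReal (ε / 2) := by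
        gcongr
        exact (measure_mono hT).trans (ht ν)
    _ = ENNReal.ofReal ε := by rw [← ENNReal.ofReal_add hε2.le hε2.le, add_halves]

end LevyProkhorov

theorem completeSpace_levyProkhorov {X : Type*} [MetricSpace X] [CompleteSpace X]
    [SecondCountableTopology X] [MeasurableSpace X] [BorelSpace X] :
    CompleteSpace (LevyProkhorov (ProbabilityMeasure X)) := by
  refine Metric.complete_of_cauchySeq_tendsto fun u hu => ?_
  let S : Set (ProbabilityMeasure X) := LevyProkhorov.toMeasure '' Set.range u
  have hS : IsTightMeasureSet {((μ : ProbabilityMeasure X) : Measure X) | μ ∈ S} := by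
    have h := isTightMeasureSet_of_totallyBounded_levyProkhorov hu.totallyBounded_range
    rwa [← Set.image_image (fun μ : ProbabilityMeasure X => (μ : Measure X))] at h
  have hK := (isCompact_closure_of_isTightMeasureSet hS).image
    LevyProkhorov.continuous_ofMeasure_probabilityMeasure
  obtain ⟨μ, -, hμ⟩ := cauchySeq_tendsto_of_isComplete hK.isComplete
    (fun n => ⟨_, subset_closure ⟨u n, ⟨n, rfl⟩, rfl⟩, rfl⟩) hu
  exact ⟨μ, hμ⟩

theorem isInducing_probabilityMeasure_map {X Y : Type*} [TopologicalSpace X]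
    [MeasurableSpace X] [BorelSpace X] [TopologicalSpace Y] [HasOuterApproxClosed Y]
    [MeasurableSpace Y] [BorelSpace Y] [FirstCountableTopology (ProbabilityMeasure Y)]
    {f : X → Y} (hf : IsInducing f) :
    IsInducing fun μ : ProbabilityMeasure X => μ.map hf.continuous.measurable.aemeasurable := by
  let F : ProbabilityMeasure X → ProbabilityMeasure Y :=
    fun μ => μ.map hf.continuous.measurable.aemeasurable
  refine isInducing_iff_nhds.2 fun μ => le_antisymm
    ((ProbabilityMeasure.continuous_map hf.continuous).tendsto μ).le_comap ?_
  rw [← tendsto_id']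
  refine tendsto_of_forall_isOpen_le_liminf' fun G hG => ?_
  obtain ⟨V, hV, rfl⟩ := hf.isOpen_iff.1 hG
  have hliminf : (F μ : Measure Y) V ≤ liminf (fun ν => (F ν : Measure Y) V) (comap F (𝓝 (F μ))) :=
    ProbabilityMeasure.le_liminf_measure_open_of_tendsto tendsto_comap hV
  simpa [F, Measure.map_apply hf.continuous.measurable hV.measurableSet] using hliminf

theorem secondCountableTopology_probabilityMeasure {X : Type*} [TopologicalSpace X]
    [TopologicalSpace.MetrizableSpace X] [TopologicalSpace.SeparableSpace X]
    [MeasurableSpace X] [BorelSpace X] :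
    SecondCountableTopology (ProbabilityMeasure X) := by
  let := TopologicalSpace.metrizableSpaceMetric X
  obtain ⟨F, hF⟩ := Metric.PiNatEmbed.exists_embedding_to_hilbert_cube (X := X)
  let := TopologicalSpace.metrizableSpaceMetric (ProbabilityMeasure (ℕ → unitInterval))
  exact (isInducing_probabilityMeasure_map hF.isInducing).secondCountableTopology

theorem polishSpace_probabilityMeasure {X : Type*} [TopologicalSpace X] [PolishSpace X]
    [MeasurableSpace X] [BorelSpace X] : PolishSpace (ProbabilityMeasure X) := by
  let := TopologicalSpace.upgradeIsCompletelyMetrizable X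
  have := completeSpace_levyProkhorov (X := X)
  have := secondCountableTopology_probabilityMeasure (X := X)
  have := (LevyProkhorov.probabilityMeasureHomeomorph
    (Ω := X)).isClosedEmbedding.IsCompletelyMetrizableSpace
  infer_instance

theorem analyticSet_setRel_image {X Y : Type*} [TopologicalSpace X] [PolishSpace X]
    [TopologicalSpace Y] [PolishSpace Y] {R : SetRel X Y} (hR : IsClosed R)
    {s : Set X} (hs : AnalyticSet s) : AnalyticSet (R.image s) := by
  have : PolishSpace R := hR.polishSpace
  have himage : R.image s = (fun p : R => p.1.2) '' ((fun p : R => p.1.1) ⁻¹' s) := by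
    ext y
    simp [SetRel.mem_image]
  rw [himage]
  exact (hs.preimage (by fun_prop)).image_of_continuous (by fun_prop)

theorem lowerSemicontinuous_measure_of_isOpen {Ω : Type*} [MeasurableSpace Ω] [TopologicalSpace Ω]
    [OpensMeasurableSpace Ω] [HasOuterApproxClosed Ω] {U : Set Ω} (hU : IsOpen U) :
    LowerSemicontinuous fun μ : ProbabilityMeasure Ω => (μ : Measure Ω) U := fun _ =>
  lowerSemicontinuousAt_iff_le_liminf.2
    (ProbabilityMeasure.le_liminf_measure_open_of_tendsto tendsto_id hU)

section Preorder

variable {E : Type*} [TopologicalSpace E] [Preorder E] [OrderClosedTopology E]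

theorem exists_isOpen_not_le_of_isCompact {K C : Set E} (hK : IsCompact K) (hC : IsCompact C)
    (hKC : ∀ x ∈ K, ∀ y ∈ C, ¬ x ≤ y) :
    ∃ U V, IsOpen U ∧ IsOpen V ∧ K ⊆ U ∧ C ⊆ V ∧ ∀ x ∈ U, ∀ y ∈ V, ¬ x ≤ y := by
  obtain ⟨U, V, hU, hV, hKU, hCV, hUV⟩ := generalized_tube_lemma hK hC
    (n := {p : E × E | ¬ p.1 ≤ p.2}) OrderClosedTopology.isClosed_le'.isOpen_compl
    fun p hp => hKC p.1 hp.1 p.2 hp.2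
  exact ⟨U, V, hU, hV, hKU, hCV, fun x hx y hy => hUV (Set.mk_mem_prod hx hy)⟩

theorem stochDom_of_forall_isOpen [MeasurableSpace E] {μ ν : Measure E} [IsFiniteMeasure μ]
    [IsFiniteMeasure ν] [μ.InnerRegularCompactLTTop] [ν.InnerRegularCompactLTTop]
    (h : ∀ U V : Set E, IsOpen U → IsOpen V → (∀ x ∈ U, ∀ y ∈ V, ¬ x ≤ y) →
      μ U + ν V ≤ ν Set.univ) : StochDom μ ν := by
  intro I hI hIu
  have hcompact {K C : Set E} (hK : IsCompact K) (hKI : K ⊆ I) (hC : IsCompact C)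
      (hCI : C ⊆ Iᶜ) : μ K + ν C ≤ ν Set.univ := by
    obtain ⟨U, V, hU, hV, hKU, hCV, hUV⟩ := exists_isOpen_not_le_of_isCompact hK hC
      fun x hx y hy hxy => hCI hy (hIu hxy (hKI hx))
    exact (add_le_add (measure_mono hKU) (measure_mono hCV)).trans (h U V hU hV hUV)
  have hsum : μ I + ν Iᶜ ≤ ν Set.univ := by
    simp_rw [hI.measure_eq_iSup_isCompact_of_ne_top (measure_ne_top μ I),
      hI.compl.measure_eq_iSup_isCompact_of_ne_top (measure_ne_top ν Iᶜ), iSup_and']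
    exact ENNReal.biSup_add_biSup_le' ⟨∅, Set.empty_subset _, isCompact_empty⟩
      ⟨∅, Set.empty_subset _, isCompact_empty⟩ fun K hK C hC => hcompact hK.2 hK.1 hC.2 hC.1
  rw [← measure_add_measure_compl hI] at hsum
  exact ENNReal.le_of_add_le_add_right (measure_ne_top ν _) hsum

variable [PolishSpace E]

theorem analyticSet_upperClosure {s : Set E} (hs : AnalyticSet s) :
    AnalyticSet (upperClosure s : Set E) :=
  analyticSet_setRel_image (R := {p : E × E | p.1 ≤ p.2}) OrderClosedTopology.isClosed_le' hs

theorem analyticSet_lowerClosure {s : Set E} (hs : AnalyticSet s) :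
    AnalyticSet (lowerClosure s : Set E) :=
  analyticSet_setRel_image (R := {p : E × E | p.2 ≤ p.1})
    (isClosed_le continuous_snd continuous_fst) hs

theorem exists_measurableSet_upperClosure_subset [MeasurableSpace E] [OpensMeasurableSpace E]
    {s t : Set E} (hs : AnalyticSet s) (ht : AnalyticSet t)
    (htl : IsLowerSet t) (hst : Disjoint s t) :
    ∃ u, MeasurableSet u ∧ ↑(upperClosure s) ⊆ u ∧ Disjoint u t := by
  have hdisj : Disjoint (upperClosure s : Set E) t := by
    rw [Set.disjoint_left]
    rintro y ⟨x, hx, hxy⟩ hy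
    exact hst.le_bot ⟨hx, htl hxy hy⟩
  obtain ⟨u, hsu, htu, hu⟩ := (analyticSet_upperClosure hs).measurablySeparable ht hdisj
  exact ⟨u, hu, hsu, htu.symm⟩

/-- Lusin separation only yields a Borel set; alternating it with upper closures and taking the
union of the resulting increasing sequence makes the separating set increasing. -/
theorem exists_measurableSet_isUpperSet_separating [MeasurableSpace E] [BorelSpace E]
    {s t : Set E} (hs : AnalyticSet s) (ht : AnalyticSet t)
    (hst : ∀ x ∈ s, ∀ y ∈ t, ¬ x ≤ y) :
    ∃ I, MeasurableSet I ∧ IsUpperSet I ∧ s ⊆ I ∧ Disjoint I t := by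
  let A := {u : Set E // AnalyticSet u ∧ Disjoint u (lowerClosure t)}
  have hstep (u : A) : ∃ v : A, MeasurableSet v.1 ∧ ↑(upperClosure u.1) ⊆ v.1 := by
    obtain ⟨v, hv, huv, hvt⟩ := exists_measurableSet_upperClosure_subset u.2.1
      (analyticSet_lowerClosure ht) (lowerClosure t).lower u.2.2
    exact ⟨⟨v, hv.analyticSet, hvt⟩, hv, huv⟩
  choose g hgm hg using hstep
  have hst' : Disjoint s (lowerClosure t) :=
    Set.disjoint_left.2 fun x hx ⟨y, hy, hxy⟩ => hst x hx y hy hxy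
  let u (n : ℕ) : A := g^[n] ⟨s, hs, hst'⟩
  have hu (n : ℕ) : ↑(upperClosure (u n).1) ⊆ (u (n + 1)).1 := by
    simpa only [u, Function.iterate_succ_apply'] using hg (u n)
  have humeas (n : ℕ) : MeasurableSet (u (n + 1)).1 := by
    simpa only [u, Function.iterate_succ_apply'] using hgm (u n)
  refine ⟨⋃ n, (u (n + 1)).1, .iUnion humeas, ?_, ?_, ?_⟩
  · intro x y hxy hx
    obtain ⟨n, hn⟩ := Set.mem_iUnion.1 hx
    exact Set.mem_iUnion.2 ⟨n + 1, hu (n + 1) ⟨x, hn, hxy⟩⟩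
  · exact (subset_upperClosure.trans (hu 0)).trans (Set.subset_iUnion (fun n => (u (n + 1)).1) 0)
  · exact Set.disjoint_iUnion_left.2 fun n => (u (n + 1)).2.2.mono_right subset_lowerClosure

variable [MeasurableSpace E] [BorelSpace E]

theorem exists_countable_separating_isUpperSet :
    ∃ S : Set (Set E), S.Countable ∧ (∀ I ∈ S, MeasurableSet I ∧ IsUpperSet I) ∧
      ∀ x y, (∀ I ∈ S, x ∈ I → y ∈ I) → x ≤ y := by
  obtain ⟨b, hbc, -, hb⟩ := TopologicalSpace.exists_countable_basis E
  let P : Set (Set E × Set E) := {p ∈ b ×ˢ b | ∀ x ∈ p.1, ∀ y ∈ p.2, ¬ x ≤ y}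
  have hP : P.Countable := (hbc.prod hbc).mono fun p hp => hp.1
  have hex : ∀ p ∈ P, ∃ I : Set E, MeasurableSet I ∧ IsUpperSet I ∧ p.1 ⊆ I ∧ Disjoint I p.2 :=
    fun p hp => exists_measurableSet_isUpperSet_separating
      (hb.isOpen hp.1.1).measurableSet.analyticSet (hb.isOpen hp.1.2).measurableSet.analyticSet hp.2
  choose! I hI hIu hpI hIp using hex
  refine ⟨I '' P, hP.image I, Set.forall_mem_image.2 fun p hp => ⟨hI p hp, hIu p hp⟩,
    fun x y hxy => ?_⟩
  by_contra hle
  obtain ⟨-, ⟨U, hU, V, hV, rfl⟩, ⟨hx, hy⟩, hUV⟩ := (hb.prod hb).exists_subset_of_mem_open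
    (a := (x, y)) (u := {p | ¬ p.1 ≤ p.2}) hle OrderClosedTopology.isClosed_le'.isOpen_compl
  have hp : (U, V) ∈ P := ⟨⟨hU, hV⟩, fun x hx y hy => hUV (Set.mk_mem_prod hx hy)⟩
  exact Set.disjoint_left.1 (hIp _ hp) (hxy _ ⟨_, hp, rfl⟩ (hpI _ hp hx)) hy

theorem StochDom.measure_add_measure_le {μ ν : Measure E} (h : StochDom μ ν) {s t : Set E}
    (hs : AnalyticSet s) (ht : MeasurableSet t)
    (hst : ∀ x ∈ s, ∀ y ∈ t, ¬ x ≤ y) : μ s + ν t ≤ ν Set.univ := by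
  obtain ⟨I, hI, hIu, hsI, hIt⟩ := exists_measurableSet_isUpperSet_separating hs ht.analyticSet hst
  calc μ s + ν t ≤ ν I + ν t := by grw [hsI, h I hI hIu]
    _ = ν (I ∪ t) := (measure_union hIt ht).symm
    _ ≤ ν Set.univ := measure_mono (Set.subset_univ _)

theorem stochDom_iff_forall_isOpen {μ ν : Measure E} [IsFiniteMeasure μ] [IsFiniteMeasure ν] :
    StochDom μ ν ↔ ∀ U V : Set E, IsOpen U → IsOpen V → (∀ x ∈ U, ∀ y ∈ V, ¬ x ≤ y) →
      μ U + ν V ≤ ν Set.univ :=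
  ⟨fun h _ _ hU hV hUV =>
    h.measure_add_measure_le hU.measurableSet.analyticSet hV.measurableSet hUV,
    stochDom_of_forall_isOpen⟩

theorem isClosed_setOf_stochDom :
    IsClosed {p : ProbabilityMeasure E × ProbabilityMeasure E |
      StochDom (p.1 : Measure E) (p.2 : Measure E)} := by
  let := TopologicalSpace.upgradeIsCompletelyMetrizable E
  simp only [stochDom_iff_forall_isOpen, measure_univ, Set.ofPred_forall]
  refine isClosed_iInter fun U => isClosed_iInter fun V => isClosed_iInter fun hU =>
    isClosed_iInter fun hV => isClosed_iInter fun _ => ?_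
  exact (((lowerSemicontinuous_measure_of_isOpen hU).comp continuous_fst).add
    ((lowerSemicontinuous_measure_of_isOpen hV).comp continuous_snd)).isClosed_preimage 1

end Preorder

theorem generateFrom_eq_of_hasCountableSeparatingOn {α : Type*} [MeasurableSpace α]
    [StandardBorelSpace α] {C : Set (Set α)} (hC : ∀ s ∈ C, MeasurableSet s)
    [HasCountableSeparatingOn α (· ∈ C) Set.univ] :
    MeasurableSpace.generateFrom C = ‹MeasurableSpace α› := by
  have hsep : @MeasurableSpace.CountablySeparated α (MeasurableSpace.generateFrom C) :=
    @MeasurableSpace.CountablySeparated.mk α (MeasurableSpace.generateFrom C) <|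
      .mono (fun _ hs => MeasurableSpace.measurableSet_generateFrom hs) Set.Subset.rfl
  have hle := MeasurableSpace.generateFrom_le hC
  exact (@Measurable.map_measurableSpace_eq α α _ _ (MeasurableSpace.generateFrom C) hsep
    id (measurable_id'' hle) Function.surjective_id).symm.trans MeasurableSpace.map_id

section PartialOrder

variable {E : Type*} [TopologicalSpace E] [PolishSpace E] [MeasurableSpace E] [BorelSpace E]
  [PartialOrder E] [OrderClosedTopology E]

theorem generateFrom_measurableSet_isUpperSet :
    MeasurableSpace.generateFrom {I : Set E | MeasurableSet I ∧ IsUpperSet I} =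
      ‹MeasurableSpace E› := by
  obtain ⟨S, hSc, hS, hle⟩ := exists_countable_separating_isUpperSet (E := E)
  have : HasCountableSeparatingOn E (· ∈ {I : Set E | MeasurableSet I ∧ IsUpperSet I}) Set.univ :=
    ⟨S, hSc, hS, fun x _ y _ hxy =>
      (hle x y fun I hI => (hxy I hI).1).antisymm (hle y x fun I hI => (hxy I hI).2)⟩
  exact generateFrom_eq_of_hasCountableSeparatingOn fun _ hI => hI.1

theorem StochDom.antisymm {μ ν : Measure E} [IsFiniteMeasure μ] (hμν : StochDom μ ν)
    (hνμ : StochDom ν μ) : μ = ν := by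
  have heq (I : Set E) (hI : MeasurableSet I) (hIu : IsUpperSet I) : μ I = ν I :=
    (hμν I hI hIu).antisymm (hνμ I hI hIu)
  exact ext_of_generate_finite _ generateFrom_measurableSet_isUpperSet.symm
    (fun s hs t ht _ => ⟨hs.1.inter ht.1, hs.2.inter ht.2⟩) (fun I hI => heq I hI.1 hI.2)
    (heq _ .univ isUpperSet_univ)

end PartialOrder

/-- For an ordered Polish space `E`, the space of Borel probability measures
with the topology of weak convergence and the stochastic order is again an ordered Polish
space: it is Polish, the stochastic order is a partial order (antisymmetric) whose graph
is closed; in particular, if `μₙ → μ`, `νₙ → ν` weakly and `μₙ ⪯ νₙ` for all `n`,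
then `μ ⪯ ν`. -/
theorem stmt1 {E : Type*} [MetricSpace E] [PolishSpace E] [MeasurableSpace E] [BorelSpace E]
    [PartialOrder E] [OrderClosedTopology E] :
    PolishSpace (ProbabilityMeasure E) ∧
    (∀ μ ν : ProbabilityMeasure E,
      StochDom (μ : Measure E) (ν : Measure E) → StochDom (ν : Measure E) (μ : Measure E) →
        μ = ν) ∧
    IsClosed {p : ProbabilityMeasure E × ProbabilityMeasure E |
      StochDom (p.1 : Measure E) (p.2 : Measure E)} ∧
    ∀ (μs νs : ℕ → ProbabilityMeasure E) (μ ν : ProbabilityMeasure E),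
      Tendsto μs atTop (nhds μ) → Tendsto νs atTop (nhds ν) →
      (∀ n, StochDom (μs n : Measure E) (νs n : Measure E)) →
      StochDom (μ : Measure E) (ν : Measure E) := by
  refine ⟨polishSpace_probabilityMeasure,
    fun μ ν hμν hνμ => ProbabilityMeasure.toMeasure_injective (hμν.antisymm hνμ),
    isClosed_setOf_stochDom, fun μs νs μ ν hμ hν h => ?_⟩
  exact isClosed_setOf_stochDom.mem_of_tendsto (hμ.prodMk_nhds hν) (.of_forall h)
end

section
/- Let E be an ordered Polish space and let μ, μ₁, μ₂, … be Borel probability measures on E such that μ₁ ⪯ μ₂ ⪯ … (increasing in stochastic order) and μᵢ ⪯ μ for every i ∈ ℕ. Then there exist, on some common probability space, E-valued random variables X, X₁, X₂, … with laws μ, μ₁, μ₂, … respectively, such that X₁ ⪯ X₂ ⪯ … ⪯ X almost surely. -/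
open MeasureTheory ProbabilityTheory Filter Topology

/-!
Measures with prescribed marginals carried by a closed set `M` are governed by duality: by
Hahn–Banach and Riesz on a compactification of `E` they exist as soon as
`∑ j, f j (x j) ≤ c` on `M` forces `∑ j, ∫ f j ∂(μ j) ≤ c`, for bounded continuous `f j`.

For two marginals `μ ⪯ ν` and `M = {x ≤ y}`, the dual inequality follows from stochastic order:
if `f x ≤ g y` whenever `x ≤ y`, the increasing hull of `{f ≥ t}` lies in `{g ≥ t}`, and inner
regularity reduces to hulls of compact sets, which are closed. This is Strassen's theorem.
Disintegrating these couplings and composing the kernels yields monotone couplings of finite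
chains. Since a dual inequality involves only finitely many marginals, the countable chain
`μ₁ ⪯ μ₂ ⪯ … ⪯ μ`, indexed by `WithTop ℕ`, needs nothing more.
-/

section RieszHahnBanach

variable {X : Type*} [TopologicalSpace X] [CompactSpace X]
  {V : Type*} [AddCommGroup V] [Module ℝ V]

lemma exists_nonneg_extension (S : V →ₗ[ℝ] C(X, ℝ)) (L : V →ₗ[ℝ] ℝ)
    (hL : ∀ v, 0 ≤ S v → 0 ≤ L v) {e : V} (he : S e = 1) :
    ∃ g : C(X, ℝ) →ₗ[ℝ] ℝ, (∀ v, g (S v) = L v) ∧ ∀ φ, 0 ≤ φ → 0 ≤ g φ := by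
  have hker : L ∈ (LinearMap.ker S).dualAnnihilator := by
    rw [Submodule.mem_dualAnnihilator]
    intro v hv
    rw [LinearMap.mem_ker] at hv
    have hneg : 0 ≤ L (-v) := hL (-v) (by rw [map_neg, hv, neg_zero])
    rw [map_neg, neg_nonneg] at hneg
    exact hneg.antisymm (hL v hv.ge)
  obtain ⟨T, rfl⟩ : ∃ T, S.dualMap T = L := by
    rwa [← LinearMap.range_dualMap_eq_dualAnnihilator_ker] at hker
  obtain ⟨g, hgT, hg⟩ := riesz_extension (PointedCone.positive ℝ C(X, ℝ))
    ⟨LinearMap.range S, T.domRestrict (LinearMap.range S)⟩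
    (by rintro ⟨_, v, rfl⟩ hv; exact hL v hv)
    (fun φ ↦ ⟨⟨‖φ‖ • 1, ‖φ‖ • e, by rw [map_smul, he]⟩, fun x ↦ by
      simpa using neg_le_iff_add_nonneg'.1 (neg_le_of_abs_le (φ.norm_coe_le_norm x))⟩)
  exact ⟨g, fun v ↦ hgT ⟨S v, v, rfl⟩, hg⟩

variable [T2Space X] [MeasurableSpace X] [BorelSpace X]

lemma exists_isProbabilityMeasure_integral_eq_of_nonneg (g : C(X, ℝ) →ₗ[ℝ] ℝ)
    (hg : ∀ φ, 0 ≤ φ → 0 ≤ g φ) (hone : g 1 = 1) :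
    ∃ π : Measure X, IsProbabilityMeasure π ∧ ∀ φ : C(X, ℝ), ∫ x, φ x ∂π = g φ := by
  let Λ : CompactlySupportedContinuousMap X ℝ →ₚ[ℝ] ℝ := PositiveLinearMap.mk₀
    { toFun f := g f.toContinuousMap
      map_add' f f' := g.map_add f.toContinuousMap f'.toContinuousMap
      map_smul' c f := g.map_smul c f.toContinuousMap }
    fun f hf ↦ hg f.toContinuousMap hf
  have hint (φ : C(X, ℝ)) : ∫ x, φ x ∂(RealRMK.rieszMeasure Λ) = g φ :=
    RealRMK.integral_rieszMeasure Λ (CompactlySupportedContinuousMap.continuousMapEquiv φ)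
  refine ⟨RealRMK.rieszMeasure Λ, isProbabilityMeasure_iff_real.2 ?_, hint⟩
  simpa [hone] using hint 1

lemma exists_isProbabilityMeasure_integral_eq_of_le (S : V →ₗ[ℝ] C(X, ℝ)) (L : V →ₗ[ℝ] ℝ)
    (hL : ∀ v c, (∀ x, S v x ≤ c) → L v ≤ c) :
    ∃ π : Measure X, IsProbabilityMeasure π ∧ ∀ v, ∫ x, S v x ∂π = L v := by
  -- Adjoining the constants to the range of `S` turns the hypothesis into positivity.
  let S' : V × ℝ →ₗ[ℝ] C(X, ℝ) := S.coprod (LinearMap.toSpanSingleton ℝ C(X, ℝ) 1)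
  let L' : V × ℝ →ₗ[ℝ] ℝ := L.coprod LinearMap.id
  have hL' (p : V × ℝ) (hp : 0 ≤ S' p) : 0 ≤ L' p := by
    have hle : L (-p.1) ≤ p.2 := hL _ _ fun x ↦ by
      simpa [S', neg_le_iff_add_nonneg'] using hp x
    simpa [L', neg_le_iff_add_nonneg'] using hle
  obtain ⟨g, hgS, hg⟩ := exists_nonneg_extension S' L' hL' (e := (0, 1)) (by simp [S'])
  have hone : g 1 = 1 := by simpa [S', L'] using hgS (0, 1)
  obtain ⟨π, hπ, hint⟩ := exists_isProbabilityMeasure_integral_eq_of_nonneg g hg hone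
  exact ⟨π, hπ, fun v ↦ by simpa [S', L', hint] using hgS (v, 0)⟩

end RieszHahnBanach

section MarginalProblem

variable {ι : Type*} [Countable ι]

lemma exists_map_eval_eq_of_sum_integral_le_of_compactSpace {K : Type*} [TopologicalSpace K]
    [CompactSpace K] [TopologicalSpace.MetrizableSpace K] [MeasurableSpace K] [BorelSpace K]
    (μ : ι → Measure K) [∀ j, IsProbabilityMeasure (μ j)] {R : Set (ι → K)} (hR : IsClosed R)
    (hdual : ∀ (f : ι →₀ C(K, ℝ)) (c : ℝ), (∀ z ∈ R, f.sum (fun j φ ↦ φ (z j)) ≤ c) →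
      f.sum (fun j φ ↦ ∫ y, φ y ∂(μ j)) ≤ c) :
    ∃ π : Measure (ι → K), IsProbabilityMeasure π ∧ (∀ j, π.map (Function.eval j) = μ j) ∧
      ∀ᵐ z ∂π, z ∈ R := by
  have : CompactSpace R := isCompact_iff_compactSpace.1 hR.isCompact
  have heval (j : ι) : Continuous fun z : R ↦ z.1 j :=
    (continuous_apply j).comp continuous_subtype_val
  have hint (j : ι) (φ : C(K, ℝ)) : Integrable φ (μ j) :=
    (BoundedContinuousFunction.mkOfCompact φ).integrable _
  let S : (ι →₀ C(K, ℝ)) →ₗ[ℝ] C(R, ℝ) := Finsupp.lsum ℝ fun j ↦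
    (ContinuousMap.compRightAlgHom ℝ ℝ ⟨fun z : R ↦ z.1 j, heval j⟩).toLinearMap
  let L : (ι →₀ C(K, ℝ)) →ₗ[ℝ] ℝ := Finsupp.lsum ℝ fun j ↦
    { toFun φ := ∫ y, φ y ∂(μ j)
      map_add' φ ψ := integral_add (hint j φ) (hint j ψ)
      map_smul' c φ := integral_const_mul c φ }
  have hS (f : ι →₀ C(K, ℝ)) (z : R) : S f z = f.sum fun j φ ↦ φ (z.1 j) := by
    simp [S, Finsupp.sum]
  obtain ⟨π, hπ, hπS⟩ := exists_isProbabilityMeasure_integral_eq_of_le S L fun f c hf ↦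
    hdual f c fun z hz ↦ (hS f ⟨z, hz⟩).symm.trans_le (hf ⟨z, hz⟩)
  refine ⟨π.map Subtype.val, Measure.isProbabilityMeasure_map (by fun_prop), fun j ↦ ?_,
    (ae_map_iff (p := (· ∈ R)) (by fun_prop) hR.measurableSet).2 (ae_of_all _ Subtype.property)⟩
  rw [show (π.map Subtype.val).map (Function.eval j) = π.map fun z : R ↦ z.1 j from
    Measure.map_map (measurable_pi_apply j) measurable_subtype_coe]
  have : IsProbabilityMeasure (π.map fun z : R ↦ z.1 j) :=
    Measure.isProbabilityMeasure_map (heval j).aemeasurable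
  refine ext_of_forall_integral_eq_of_IsFiniteMeasure fun φ ↦ ?_
  rw [integral_map (heval j).aemeasurable φ.continuous.aestronglyMeasurable]
  simpa [S, L] using hπS (Finsupp.single j φ.toContinuousMap)

variable {E : Type*} [TopologicalSpace E] [PolishSpace E] [MeasurableSpace E] [BorelSpace E]

lemma exists_map_piMap_eq {K : Type*} [TopologicalSpace K] [PolishSpace K]
    [MeasurableSpace K] [BorelSpace K] {e : E → K} (he : IsEmbedding e) (μ : ι → Measure E)
    {π : Measure (ι → K)} (hπ : ∀ j, π.map (Function.eval j) = (μ j).map e) :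
    ∃ ρ : Measure (ι → E), ρ.map (Pi.map fun _ ↦ e) = π ∧
      ∀ j, ρ.map (Function.eval j) = μ j := by
  have hem : MeasurableEmbedding e := he.continuous.measurableEmbedding he.injective
  have hJ : IsEmbedding (Pi.map fun _ : ι ↦ e) := .piMap fun _ ↦ he
  have hJm := hJ.continuous.measurableEmbedding hJ.injective
  have hrange : ∀ᵐ z ∂π, z ∈ Set.range (Pi.map fun _ : ι ↦ e) := by
    simp only [Set.range_piMap, Set.mem_univ_pi]
    refine ae_all_iff.2 fun j ↦ ae_of_ae_map (measurable_pi_apply j).aemeasurable ?_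
    change ∀ᵐ y ∂π.map (Function.eval j), y ∈ Set.range e
    rw [hπ, hem.ae_map_iff]
    exact ae_of_all _ Set.mem_range_self
  have hmap : (π.comap (Pi.map fun _ ↦ e)).map (Pi.map fun _ ↦ e) = π := by
    rw [hJm.map_comap, Measure.restrict_eq_self_of_ae_mem hrange]
  refine ⟨_, hmap, fun j ↦ hem.map_injective ?_⟩
  rw [← hπ, Measure.map_map hem.measurable (measurable_pi_apply j)]
  conv_rhs => rw [← hmap, Measure.map_map (measurable_pi_apply j) hJm.measurable]
  rfl

theorem exists_map_eval_eq_of_sum_integral_le (μ : ι → Measure E) [∀ j, IsProbabilityMeasure (μ j)]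
    {M : Set (ι → E)} (hM : IsClosed M)
    (hdual : ∀ (f : ι →₀ BoundedContinuousFunction E ℝ) (c : ℝ),
      (∀ x ∈ M, f.sum (fun j φ ↦ φ (x j)) ≤ c) → f.sum (fun j φ ↦ ∫ y, φ y ∂(μ j)) ≤ c) :
    ∃ π : Measure (ι → E), IsProbabilityMeasure π ∧ (∀ j, π.map (Function.eval j) = μ j) ∧
      ∀ᵐ x ∂π, x ∈ M := by
  let := TopologicalSpace.metrizableSpaceMetric E
  obtain ⟨e, he⟩ := Metric.PiNatEmbed.exists_embedding_to_hilbert_cube (X := E)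
  have hJ : IsEmbedding (Pi.map fun _ : ι ↦ e) := .piMap fun _ ↦ he
  have (j : ι) : IsProbabilityMeasure ((μ j).map e) :=
    Measure.isProbabilityMeasure_map he.continuous.aemeasurable
  let restrict (φ : C(ℕ → unitInterval, ℝ)) : BoundedContinuousFunction E ℝ :=
    (BoundedContinuousFunction.mkOfCompact φ).compContinuous ⟨e, he.continuous⟩
  have restrict_zero : restrict 0 = 0 := rfl
  obtain ⟨π, hπ, hmarg, hsupp⟩ := exists_map_eval_eq_of_sum_integral_le_of_compactSpace
    (fun j ↦ (μ j).map e) (isClosed_closure (s := Pi.map (fun _ ↦ e) '' M)) fun f c hf ↦ by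
      have hle := hdual (f.mapRange restrict restrict_zero) c fun x hx ↦ by
        rw [Finsupp.sum_mapRange_index fun _ ↦ rfl]
        exact hf _ (subset_closure (Set.mem_image_of_mem _ hx))
      rw [Finsupp.sum_mapRange_index fun _ ↦ integral_zero _ _] at hle
      have hmap (j : ι) (φ : C(ℕ → unitInterval, ℝ)) :
          ∫ z, φ z ∂(μ j).map e = ∫ y, restrict φ y ∂(μ j) :=
        integral_map he.continuous.aemeasurable φ.continuous.aestronglyMeasurable
      simpa only [hmap] using hle
  obtain ⟨ρ, rfl, hρ⟩ := exists_map_piMap_eq he μ hmarg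
  refine ⟨ρ, Measure.isProbabilityMeasure_of_map (Pi.map fun _ ↦ e), hρ, ?_⟩
  filter_upwards [ae_of_ae_map hJ.continuous.aemeasurable hsupp] with x hx
  rwa [← hM.closure_eq, hJ.closure_eq_preimage_closure_image]

theorem exists_map_eval_eq_of_forall_finset (μ : ι → Measure E) [∀ j, IsProbabilityMeasure (μ j)]
    {M : Set (ι → E)} (hM : IsClosed M)
    (hfin : ∀ s : Finset ι, ∃ π : Measure (ι → E), IsProbabilityMeasure π ∧
      (∀ j ∈ s, π.map (Function.eval j) = μ j) ∧ ∀ᵐ x ∂π, x ∈ M) :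
    ∃ π : Measure (ι → E), IsProbabilityMeasure π ∧ (∀ j, π.map (Function.eval j) = μ j) ∧
      ∀ᵐ x ∂π, x ∈ M := by
  refine exists_map_eval_eq_of_sum_integral_le μ hM fun f c hf ↦ ?_
  obtain ⟨π, hπ, hmarg, hsupp⟩ := hfin f.support
  have hint (j : ι) : Integrable (fun x : ι → E ↦ f j (x j)) π :=
    ((f j).compContinuous (⟨Function.eval j, continuous_apply j⟩ : C(ι → E, E))).integrable π
  have hmargf (j : ι) (hj : j ∈ f.support) : ∫ y, f j y ∂(μ j) = ∫ x, f j (x j) ∂π := by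
    rw [← hmarg j hj]
    exact integral_map (measurable_pi_apply j).aemeasurable (f j).continuous.aestronglyMeasurable
  calc f.sum (fun j φ ↦ ∫ y, φ y ∂(μ j))
      = ∑ j ∈ f.support, ∫ x, f j (x j) ∂π := Finset.sum_congr rfl hmargf
    _ = ∫ x, f.sum (fun j φ ↦ φ (x j)) ∂π := (integral_finsetSum _ fun j _ ↦ hint j).symm
    _ ≤ ∫ _, c ∂π := integral_mono_ae (integrable_finsetSum _ fun j _ ↦ hint j)
        (integrable_const c) (hsupp.mono hf)
    _ = c := by simp

end MarginalProblem

section Strassen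

variable {E : Type*} [TopologicalSpace E] [Preorder E] [OrderClosedTopology E]

lemma isClosed_upperClosure_of_isCompact {K : Set E} (hK : IsCompact K) :
    IsClosed (upperClosure K : Set E) := by
  have : CompactSpace K := isCompact_iff_compactSpace.1 hK
  have hle : IsClosed {p : K × E | p.1.1 ≤ p.2} :=
    isClosed_le (continuous_subtype_val.comp continuous_fst) continuous_snd
  convert isClosedMap_snd_of_compactSpace _ hle using 1
  ext y
  simp

variable [PolishSpace E] [MeasurableSpace E] [BorelSpace E] {μ ν : Measure E}

namespace StochDom

lemma measure_le_upperClosure [IsFiniteMeasure μ] (h : StochDom μ ν) {A : Set E}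
    (hA : MeasurableSet A) : μ A ≤ ν (upperClosure A) := by
  refine le_of_forall_lt fun r hr ↦ ?_
  obtain ⟨K, hKA, ⟨hK, -⟩, hrK⟩ :=
    innerRegular_isCompact_isClosed_measurableSet_of_finite μ hA r hr
  calc r < μ K := hrK
    _ ≤ μ (upperClosure K) := measure_mono subset_upperClosure
    _ ≤ ν (upperClosure K) :=
      h _ (isClosed_upperClosure_of_isCompact hK).measurableSet (upperClosure K).upper
    _ ≤ ν (upperClosure A) := measure_mono (upperClosure_anti hKA)

lemma lintegral_ofReal_le [IsFiniteMeasure μ] (h : StochDom μ ν) {f g : E → ℝ}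
    (hf : Measurable f) (hg : AEMeasurable g ν) (hf0 : 0 ≤ f) (hfg : ∀ x y, x ≤ y → f x ≤ g y) :
    ∫⁻ x, ENNReal.ofReal (f x) ∂μ ≤ ∫⁻ y, ENNReal.ofReal (g y) ∂ν := by
  have hg0 : 0 ≤ g := fun x ↦ (hf0 x).trans (hfg x x le_rfl)
  rw [lintegral_eq_lintegral_meas_le μ (ae_of_all _ hf0) hf.aemeasurable,
    lintegral_eq_lintegral_meas_le ν (ae_of_all _ hg0) hg]
  refine lintegral_mono fun t ↦ (h.measure_le_upperClosure (hf measurableSet_Ici)).trans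
    (measure_mono ?_)
  rintro y ⟨x, hx, hxy⟩
  exact (Set.mem_Ici.1 hx).trans (hfg x y hxy)

lemma integral_le_integral_of_nonneg [IsFiniteMeasure μ] (h : StochDom μ ν) {f g : E → ℝ}
    (hf : Measurable f) (hg : Integrable g ν) (hf0 : 0 ≤ f)
    (hfg : ∀ x y, x ≤ y → f x ≤ g y) : ∫ x, f x ∂μ ≤ ∫ y, g y ∂ν := by
  have hg0 : 0 ≤ g := fun x ↦ (hf0 x).trans (hfg x x le_rfl)
  rw [integral_eq_lintegral_of_nonneg_ae (ae_of_all _ hf0) hf.aestronglyMeasurable,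
    integral_eq_lintegral_of_nonneg_ae (ae_of_all _ hg0) hg.1]
  exact ENNReal.toReal_mono ((hasFiniteIntegral_iff_ofReal (ae_of_all _ hg0)).1 hg.2).ne
    (h.lintegral_ofReal_le hf hg.aemeasurable hf0 hfg)

lemma integral_le_integral [IsProbabilityMeasure μ] [IsProbabilityMeasure ν]
    (h : StochDom μ ν) {f g : BoundedContinuousFunction E ℝ} (hfg : ∀ x y, x ≤ y → f x ≤ g y) :
    ∫ x, f x ∂μ ≤ ∫ y, g y ∂ν := by
  have hshift := h.integral_le_integral_of_nonneg
    (f := fun x ↦ f x + ‖f‖) (g := fun y ↦ g y + ‖f‖)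
    (f.continuous.measurable.add_const _) ((g.integrable ν).add (integrable_const _))
    (fun x ↦ neg_le_iff_add_nonneg.1 (neg_le_of_abs_le (f.norm_coe_le_norm x)))
    (fun x y hxy ↦ by gcongr; exact hfg x y hxy)
  rw [integral_add (f.integrable μ) (integrable_const _),
    integral_add (g.integrable ν) (integrable_const _)] at hshift
  simpa using hshift

theorem exists_coupling [IsProbabilityMeasure μ] [IsProbabilityMeasure ν] (h : StochDom μ ν) :
    ∃ π : Measure (E × E), IsProbabilityMeasure π ∧ π.fst = μ ∧ π.snd = ν ∧
      ∀ᵐ p ∂π, p.1 ≤ p.2 := by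
  have (j : Fin 2) : IsProbabilityMeasure (![μ, ν] j) := by fin_cases j <;> assumption
  obtain ⟨π, hπ, hmarg, hle⟩ := exists_map_eval_eq_of_sum_integral_le ![μ, ν]
    (M := {x | x 0 ≤ x 1}) (isClosed_le (continuous_apply 0) (continuous_apply 1)) fun f c hf ↦ by
      have hf' (x y : E) (hxy : x ≤ y) : f 0 x ≤ (.const E c - f 1) y := by
        have hxy' := hf ![x, y] hxy
        rw [Finsupp.sum_fintype _ _ fun _ ↦ rfl, Fin.sum_univ_two] at hxy'
        exact le_sub_iff_add_le.2 hxy'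
      have hint := h.integral_le_integral hf'
      rw [Finsupp.sum_fintype _ _ fun _ ↦ integral_zero _ _, Fin.sum_univ_two]
      simpa [integral_sub, (f 1).integrable ν, le_sub_iff_add_le] using hint
  have hm : Measurable fun x : Fin 2 → E ↦ (x 0, x 1) := by fun_prop
  refine ⟨π.map fun x ↦ (x 0, x 1), Measure.isProbabilityMeasure_map hm.aemeasurable, ?_, ?_, ?_⟩
  · rw [Measure.fst_map_prodMk (by fun_prop)]; exact hmarg 0
  · rw [Measure.snd_map_prodMk (by fun_prop)]; exact hmarg 1
  · rwa [ae_map_iff hm.aemeasurable OrderClosedTopology.isClosed_le'.measurableSet]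

theorem exists_kernel [IsProbabilityMeasure μ] [IsProbabilityMeasure ν] (h : StochDom μ ν) :
    ∃ κ : Kernel E E, IsMarkovKernel κ ∧ κ ∘ₘ μ = ν ∧ ∀ᵐ x ∂μ, ∀ᵐ y ∂κ x, x ≤ y := by
  obtain ⟨π, hπ, rfl, rfl, hle⟩ := h.exists_coupling
  have : Nonempty E := nonempty_of_isProbabilityMeasure π.fst
  refine ⟨π.condKernel, inferInstance, ?_,
    Measure.ae_ae_of_ae_compProd (p := fun q ↦ q.1 ≤ q.2) ?_⟩
  · rw [← Measure.snd_compProd, π.disintegrate]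
  · rwa [π.disintegrate]

theorem exists_extension {Ω : Type*} [MeasurableSpace Ω] {P : Measure Ω} {X : Ω → E}
    [IsProbabilityMeasure P] [IsProbabilityMeasure ν] (h : StochDom (P.map X) ν)
    (hX : Measurable X) :
    ∃ ρ : Measure (Ω × E), IsProbabilityMeasure ρ ∧ ρ.fst = P ∧ ρ.snd = ν ∧
      ∀ᵐ p ∂ρ, X p.1 ≤ p.2 := by
  have : IsProbabilityMeasure (P.map X) := Measure.isProbabilityMeasure_map hX.aemeasurable
  obtain ⟨κ, hκ, hκν, hκle⟩ := h.exists_kernel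
  have hmeas : MeasurableSet {p : Ω × E | X p.1 ≤ p.2} :=
    OrderClosedTopology.isClosed_le'.measurableSet.preimage (hX.prodMap measurable_id)
  refine ⟨P ⊗ₘ κ.comap X hX, inferInstance, Measure.fst_compProd _ _, ?_,
    Measure.ae_compProd_of_ae_ae hmeas (ae_of_ae_map hX.aemeasurable hκle)⟩
  rw [Measure.snd_compProd, ← Kernel.comp_deterministic_eq_comap, ← Measure.comp_assoc,
    Measure.deterministic_comp_eq_map, hκν]

end StochDom

end Strassen

section Chain

variable {ι E : Type*} [Preorder E]

lemma monotone_ite_lt [Preorder ι] [DecidableLT ι] {x : ι → E} (hx : Monotone x) {y : E}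
    (hxy : ∀ i, x i ≤ y) (a : ι) : Monotone fun i ↦ if i < a then x i else y := by
  intro i j hij
  dsimp only
  split_ifs with hi hj hj
  · exact hx hij
  · exact hxy i
  · exact absurd (hij.trans_lt hj) hi
  · exact le_rfl

variable [TopologicalSpace E] [OrderClosedTopology E]

lemma isClosed_setOf_monotone_and_le_apply [Preorder ι] (a : ι) :
    IsClosed {x : ι → E | Monotone x ∧ ∀ i, x i ≤ x a} := by
  simp only [Set.ofPred_and, Set.ofPred_forall]
  exact isClosed_monotone.inter <| isClosed_iInter fun i ↦
    isClosed_le (continuous_apply i) (continuous_apply a)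

variable [LinearOrder ι] [Countable ι] [PolishSpace E] [MeasurableSpace E] [BorelSpace E]

lemma exists_extend_top {π : Measure (ι → E)} [IsProbabilityMeasure π]
    {ν : Measure E} [IsProbabilityMeasure ν] {b : ι} (h : StochDom (π.map (Function.eval b)) ν)
    (hπ : ∀ᵐ x ∂π, Monotone x ∧ ∀ i, x i ≤ x b) (a : ι) :
    ∃ π' : Measure (ι → E), IsProbabilityMeasure π' ∧
      (∀ i < a, π'.map (Function.eval i) = π.map (Function.eval i)) ∧
      π'.map (Function.eval a) = ν ∧ ∀ᵐ x ∂π', Monotone x ∧ ∀ i, x i ≤ x a := by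
  obtain ⟨ρ, hρ, rfl, rfl, hρle⟩ := h.exists_extension (measurable_pi_apply b)
  -- All coordinates from `a` on copy the new variable, so it dominates the whole path again.
  let T (p : (ι → E) × E) (i : ι) : E := if i < a then p.1 i else p.2
  have hT : Measurable T := measurable_pi_lambda _ fun i ↦ by
    by_cases hi : i < a <;> simp only [T, hi, if_true, if_false] <;> fun_prop
  have hTlt (i : ι) (hi : i < a) : Function.eval i ∘ T = Function.eval i ∘ Prod.fst := by
    ext p
    simp [T, hi]
  have hTa : Function.eval a ∘ T = Prod.snd := by
    ext p
    simp [T]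
  refine ⟨ρ.map T, Measure.isProbabilityMeasure_map hT.aemeasurable, fun i hi ↦ ?_, ?_,
    (ae_map_iff hT.aemeasurable (isClosed_setOf_monotone_and_le_apply a).measurableSet).2 ?_⟩
  · rw [Measure.map_map (measurable_pi_apply i) hT, hTlt i hi,
      ← Measure.map_map (measurable_pi_apply i) measurable_fst, Measure.fst]
  · rw [Measure.map_map (measurable_pi_apply a) hT, hTa, Measure.snd]
  · filter_upwards [hρle, ae_of_ae_map measurable_fst.aemeasurable hπ] with p hle ⟨hmono, htop⟩
    have hle' (i : ι) : p.1 i ≤ p.2 := (htop i).trans hle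
    refine ⟨monotone_ite_lt hmono hle' a, fun i ↦ ?_⟩
    by_cases hi : i < a <;> simp [T, hi, hle']

variable (μ : ι → Measure E) [∀ i, IsProbabilityMeasure (μ i)]

lemma exists_chain_insert_top (hμ : ∀ i j, i ≤ j → StochDom (μ i) (μ j)) (s : Finset ι) (a : ι)
    (ha : ∀ i ∈ s, i ≤ a) :
    ∃ π : Measure (ι → E), IsProbabilityMeasure π ∧
      (∀ i ∈ insert a s, π.map (Function.eval i) = μ i) ∧
      ∀ᵐ x ∂π, Monotone x ∧ ∀ i, x i ≤ x a := by
  induction s using Finset.induction_on_max generalizing a with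
  | empty =>
    have hconst : Measurable (Function.const ι : E → ι → E) :=
      measurable_pi_lambda _ fun _ ↦ measurable_id
    refine ⟨(μ a).map (Function.const ι), Measure.isProbabilityMeasure_map hconst.aemeasurable,
      fun i hi ↦ ?_, ?_⟩
    · obtain rfl : i = a := by simpa using hi
      rw [Measure.map_map (measurable_pi_apply i) hconst]
      exact Measure.map_id
    · exact (ae_map_iff hconst.aemeasurable
        (isClosed_setOf_monotone_and_le_apply a).measurableSet).2
        (ae_of_all _ fun _ ↦ ⟨monotone_const, fun _ ↦ le_rfl⟩)
  | insert b s hlt ih =>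
    obtain ⟨π, hπ, hmarg, hchain⟩ := ih b fun i hi ↦ (hlt i hi).le
    have hdom : StochDom (π.map (Function.eval b)) (μ a) := by
      rw [hmarg b (Finset.mem_insert_self b s)]
      exact hμ b a (ha b (Finset.mem_insert_self b s))
    obtain ⟨π', hπ', hlt', htop', hchain'⟩ := exists_extend_top hdom hchain a
    refine ⟨π', hπ', fun i hi ↦ ?_, hchain'⟩
    obtain rfl | hi := Finset.mem_insert.1 hi
    · exact htop'
    obtain rfl | hia := (ha i hi).eq_or_lt
    · exact htop'
    · rw [hlt' i hia, hmarg i hi]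

theorem exists_monotone_coupling [Nonempty ι] (hμ : ∀ i j, i ≤ j → StochDom (μ i) (μ j)) :
    ∃ π : Measure (ι → E), IsProbabilityMeasure π ∧ (∀ i, π.map (Function.eval i) = μ i) ∧
      ∀ᵐ x ∂π, Monotone x :=
  exists_map_eval_eq_of_forall_finset μ isClosed_monotone fun s ↦ by
    obtain ⟨a, ha⟩ := s.exists_le
    obtain ⟨π, hπ, hmarg, hchain⟩ := exists_chain_insert_top μ hμ s a ha
    exact ⟨π, hπ, fun i hi ↦ hmarg i (Finset.mem_insert_of_mem hi), hchain.mono fun _ ↦ And.left⟩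

end Chain

theorem stmt2_general {E : Type*} [TopologicalSpace E] [PolishSpace E] [MeasurableSpace E]
    [BorelSpace E] [Preorder E] [OrderClosedTopology E]
    (μ : Measure E) (μs : ℕ → Measure E)
    [IsProbabilityMeasure μ] [∀ i, IsProbabilityMeasure (μs i)]
    (hmono : ∀ i, StochDom (μs i) (μs (i + 1)))
    (hbdd : ∀ i, StochDom (μs i) μ) :
    ∃ (Ω : Type) (_ : MeasurableSpace Ω) (Pr : Measure Ω) (_ : IsProbabilityMeasure Pr)
      (X : Ω → E) (Xs : ℕ → Ω → E),
      Measurable X ∧ (∀ i, Measurable (Xs i)) ∧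
      Pr.map X = μ ∧ (∀ i, Pr.map (Xs i) = μs i) ∧
      (∀ᵐ ω ∂Pr, (∀ i, Xs i ω ≤ Xs (i + 1) ω) ∧ ∀ i, Xs i ω ≤ X ω) := by
  let ν (i : WithTop ℕ) : Measure E := i.recTopCoe μ μs
  have hν : ∀ i, IsProbabilityMeasure (ν i)
    | ⊤ => ‹IsProbabilityMeasure μ›
    | (i : ℕ) => inferInstanceAs (IsProbabilityMeasure (μs i))
  have hdom (i j : WithTop ℕ) (hij : i ≤ j) : StochDom (ν i) (ν j) := fun I hI hup ↦
    WithTop.monotone_iff (f := fun i ↦ ν i I).2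
      ⟨monotone_nat_of_le_succ fun i ↦ hmono i I hI hup, fun i ↦ hbdd i I hI hup⟩ hij
  obtain ⟨π, hπ, hmarg, hchain⟩ := exists_monotone_coupling ν hdom
  have : Nonempty (WithTop ℕ → E) := nonempty_of_isProbabilityMeasure π
  obtain ⟨f, hf, hfπ⟩ := Measure.exists_measurable_map_eq π
  have hlaw (i : WithTop ℕ) : volume.map (fun ω ↦ f ω i) = ν i := by
    rw [← hmarg i, ← hfπ, Measure.map_map (measurable_pi_apply i) hf]
    rfl
  refine ⟨unitInterval, inferInstance, volume, inferInstance, (f · ⊤), fun i ω ↦ f ω i,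
    by fun_prop, by fun_prop, hlaw ⊤, fun i ↦ hlaw i, ?_⟩
  filter_upwards [ae_of_ae_map hf.aemeasurable (hfπ ▸ hchain)] with ω hω
  exact ⟨fun i ↦ hω (WithTop.coe_le_coe.2 i.le_succ), fun i ↦ hω le_top⟩

/-- If `μ₁ ⪯ μ₂ ⪯ …` is increasing in stochastic order and `μᵢ ⪯ μ` for all
`i`, then on some common probability space there are random variables `X, X₁, X₂, …`
with laws `μ, μ₁, μ₂, …` such that `X₁ ⪯ X₂ ⪯ … ⪯ X` almost surely. -/
theorem stmt2 {E : Type*} [MetricSpace E] [PolishSpace E] [MeasurableSpace E] [BorelSpace E]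
    [PartialOrder E] [OrderClosedTopology E]
    (μ : Measure E) (μs : ℕ → Measure E)
    [IsProbabilityMeasure μ] [∀ i, IsProbabilityMeasure (μs i)]
    (hmono : ∀ i, StochDom (μs i) (μs (i + 1)))
    (hbdd : ∀ i, StochDom (μs i) μ) :
    ∃ (Ω : Type) (_ : MeasurableSpace Ω) (Pr : Measure Ω) (_ : IsProbabilityMeasure Pr)
      (X : Ω → E) (Xs : ℕ → Ω → E),
      Measurable X ∧ (∀ i, Measurable (Xs i)) ∧
      Pr.map X = μ ∧ (∀ i, Pr.map (Xs i) = μs i) ∧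
      (∀ᵐ ω ∂Pr, (∀ i, Xs i ω ≤ Xs (i + 1) ω) ∧ ∀ i, Xs i ω ≤ X ω) := by
  exact stmt2_general μ μs hmono hbdd
end
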